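/- Let k be a field and C a k-linear category in which every Hom-space Hom(X,Y) is a finite-dimensional k-vector space. Let 𝒥 be a finite set of objects of C, each of which is non-null (End(J) ≠ 0), such that for all objects X, Y the k-linear map Φ : ⊕_{J∈𝒥} Hom(X,J) ⊗_k Hom(J,Y) → Hom(X,Y), f⊗g ↦ g∘f, is bijective. Then: (1) every J ∈ 𝒥 is simple, i.e. every endomorphism of J is a k-multiple of the identity; (2) for every simple object X there exists J_X ∈ 𝒥 with X ≅ J_X, and Hom(X,J) = 0 = Hom(J,X) for every J ∈ 𝒥 that is not isomorphic to J_X; (3) any two simple objects X, Y of C are either isomorphic or satisfy Hom(X,Y) = 0. -/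

import Mathlib

/-!
Restricting `Φ` at `(J, J)` to the summand of `J ∈ 𝒥`, the map `End J ⊗ End J → End J` is
injective; comparing dimensions gives `dim End J = 1`. For distinct indices `i ≠ j`, a morphism
`f : Jᵢ ⟶ Jⱼ` is the image of
`𝟙 ⊗ f` in the `i`-th summand and of `f ⊗ 𝟙` in the `j`-th summand; hence both vanish and `f = 0`.

Surjectivity of `Φ` at `(X, X)` for a simple `X` gives `f : X ⟶ J`, `g : J ⟶ X` with `f ≫ g ≠ 0`.
Since `X` and `J` are both simple, `f` is then an isomorphism, and the remaining claims
are transported along such isomorphisms from the vanishing of `Hom(Jᵢ, Jⱼ)`.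
-/

open CategoryTheory
open scoped TensorProduct

/-- Composition in a `k`-linear category, as a bilinear map. -/
noncomputable def homComp (k : Type*) [Field k] {C : Type*} [Category C] [Preadditive C]
    [Linear k C] (X Y Z : C) : (X ⟶ Y) →ₗ[k] (Y ⟶ Z) →ₗ[k] (X ⟶ Z) :=
  LinearMap.mk₂ k (fun f g => f ≫ g)
    (fun _ _ _ => by simp)
    (fun _ _ _ => by simp)
    (fun _ _ _ => by simp)
    (fun _ _ _ => by simp)

/-- The canonical map `Φ : ⊕_{J∈𝒥} Hom(X,J) ⊗ Hom(J,Y) → Hom(X,Y)`, `f⊗g ↦ g∘f`. -/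
noncomputable def homDecomp (k : Type*) [Field k] {C : Type*} [Category C] [Preadditive C]
    [Linear k C] {J : Type*} [Fintype J] [DecidableEq J] (obj : J → C) (X Y : C) :
    ((j : J) → (X ⟶ obj j) ⊗[k] (obj j ⟶ Y)) →ₗ[k] (X ⟶ Y) :=
  LinearMap.lsum k (fun j : J => (X ⟶ obj j) ⊗[k] (obj j ⟶ Y)) k
    (fun j => TensorProduct.lift (homComp k X (obj j) Y))

section Decomposition

variable {k : Type*} [Field k] {C : Type*} [Category C] [Preadditive C] [Linear k C]

lemma homDecomp_single_tmul {J : Type*} [Fintype J] [DecidableEq J] (obj : J → C) (X Y : C)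
    (j : J) (f : X ⟶ obj j) (g : obj j ⟶ Y) :
    homDecomp k obj X Y (Pi.single j (f ⊗ₜ[k] g)) = f ≫ g := by
  rw [homDecomp, LinearMap.lsum_piSingle]
  simp [homComp]

/-- The index set is automatically irredundant: distinct indices give orthogonal objects. -/
lemma hom_eq_zero_of_ne {J : Type*} [Fintype J] [DecidableEq J] {obj : J → C}
    (hone : ∀ j, 𝟙 (obj j) ≠ 0)
    (hΦ : ∀ X Y : C, Function.Injective (homDecomp k obj X Y)) {i j : J} (hij : i ≠ j)
    (f : obj i ⟶ obj j) : f = 0 := by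
  have h : (Pi.single i (𝟙 (obj i) ⊗ₜ[k] f) :
      (l : J) → (obj i ⟶ obj l) ⊗[k] (obj l ⟶ obj j)) = Pi.single j (f ⊗ₜ[k] 𝟙 (obj j)) := by
    apply hΦ
    simp [homDecomp_single_tmul]
  have hcomp := congrFun h i
  rw [Pi.single_eq_same, Pi.single_eq_of_ne hij] at hcomp
  -- A functional that is nonzero on `𝟙` turns `𝟙 ⊗ f = 0` into `f = 0`.
  obtain ⟨φ, hφ⟩ := Module.Projective.exists_dual_ne_zero k (hone i)
  have h2 := congrArg (fun t => TensorProduct.lid k _ (LinearMap.rTensor _ φ t)) hcomp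
  simpa [hφ] using h2

/-- Injectivity of `End J ⊗ End J → End J` forces `(dim End J)² ≤ dim End J`. -/
lemma end_eq_smul_id {J : Type*} [Fintype J] [DecidableEq J] {obj : J → C}
    (hfd : ∀ X Y : C, FiniteDimensional k (X ⟶ Y))
    (hΦ : ∀ X Y : C, Function.Injective (homDecomp k obj X Y)) {j : J}
    (hone : 𝟙 (obj j) ≠ 0) (f : obj j ⟶ obj j) : ∃ c : k, f = c • 𝟙 (obj j) := by
  have := hfd (obj j) (obj j)
  have hinj : Function.Injective ((homDecomp k obj (obj j) (obj j)).comp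
      (LinearMap.single k (fun l : J => (obj j ⟶ obj l) ⊗[k] (obj l ⟶ obj j)) j)) :=
    (hΦ _ _).comp
      (Pi.single_injective (M := fun l : J => (obj j ⟶ obj l) ⊗[k] (obj l ⟶ obj j)) j)
  have hle := LinearMap.finrank_le_finrank_of_injective hinj
  rw [Module.finrank_tensorProduct] at hle
  have : Nontrivial (obj j ⟶ obj j) := ⟨⟨_, _, hone⟩⟩
  have hpos : 0 < Module.finrank k (obj j ⟶ obj j) := Module.finrank_pos
  have h1 : Module.finrank k (obj j ⟶ obj j) = 1 := by nlinarith
  obtain ⟨c, hc⟩ := (finrank_eq_one_iff_of_nonzero' _ hone).1 h1 f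
  exact ⟨c, hc.symm⟩

/-- For simple `X` and `Y`, writing `f ≫ g = c • 𝟙` and `g ≫ f = d • 𝟙`, the two ways of
evaluating `f ≫ g ≫ f` give `c = d`, so `c⁻¹ • g` is inverse to `f` once `c ≠ 0`. -/
lemma nonempty_iso_of_comp_ne_zero {X Y : C} (hX : ∀ f : X ⟶ X, ∃ c : k, f = c • 𝟙 X)
    (hY : ∀ f : Y ⟶ Y, ∃ c : k, f = c • 𝟙 Y) (f : X ⟶ Y) (g : Y ⟶ X) (hfg : f ≫ g ≠ 0) :
    Nonempty (X ≅ Y) := by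
  obtain ⟨c, hc⟩ := hX (f ≫ g)
  obtain ⟨d, hd⟩ := hY (g ≫ f)
  have hc0 : c ≠ 0 := by
    rintro rfl
    exact hfg (by simpa using hc)
  have hf : f ≠ 0 := by
    rintro rfl
    exact hfg (by simp)
  have hcd : c • f = d • f := by
    calc c • f = (f ≫ g) ≫ f := by rw [hc]; simp
      _ = f ≫ (g ≫ f) := Category.assoc _ _ _
      _ = d • f := by rw [hd]; simp
  obtain rfl : c = d := smul_left_injective k hf hcd
  exact ⟨⟨f, c⁻¹ • g, by simp [hc, smul_smul, hc0], by simp [hd, smul_smul, hc0]⟩⟩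

/-- Surjectivity of `Φ` at `(X, X)` yields a nonzero endomorphism of `X` factoring through `𝒥`. -/
lemma exists_comp_ne_zero {J : Type*} [Fintype J] [DecidableEq J] {obj : J → C} {X : C}
    (hΦ : Function.Surjective (homDecomp k obj X X)) (hX : 𝟙 X ≠ 0) :
    ∃ (j : J) (f : X ⟶ obj j) (g : obj j ⟶ X), f ≫ g ≠ 0 := by
  by_contra! h
  have h0 : homDecomp k obj X X = 0 := by
    refine LinearMap.pi_ext' fun j => TensorProduct.ext' fun f g => ?_
    simpa [homDecomp_single_tmul] using h j f g
  obtain ⟨t, ht⟩ := hΦ (𝟙 X)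
  exact hX (by rw [← ht, h0, LinearMap.zero_apply])

end Decomposition

/-- Let `C` be a `k`-linear category with finite-dimensional
Hom-spaces and `𝒥` a finite set of non-null objects such that
`Φ : ⊕_{J∈𝒥} Hom(X,J) ⊗ Hom(J,Y) → Hom(X,Y)` is bijective for all `X`, `Y`.  Then
(1) every `J ∈ 𝒥` is simple; (2) every simple object `X` is isomorphic to some
`J_X ∈ 𝒥`, and `Hom(X,J) = 0 = Hom(J,X)` for every `J ∈ 𝒥` not isomorphic to `J_X`;
(3) two simple objects are isomorphic or have zero Hom-spaces between them. -/
theorem semisimple_hom_decomposition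
    (k : Type*) [Field k] {C : Type*} [Category C] [Preadditive C] [Linear k C]
    (hfd : ∀ X Y : C, FiniteDimensional k (X ⟶ Y))
    {J : Type*} [Fintype J] [DecidableEq J] (obj : J → C)
    (hnn : ∀ j : J, ∃ f : obj j ⟶ obj j, f ≠ 0)
    (hΦ : ∀ X Y : C, Function.Bijective (homDecomp k obj X Y)) :
    (∀ j : J, (∀ f : obj j ⟶ obj j, ∃ c : k, f = c • 𝟙 (obj j)) ∧ 𝟙 (obj j) ≠ 0) ∧
    (∀ X : C, ((∀ f : X ⟶ X, ∃ c : k, f = c • 𝟙 X) ∧ 𝟙 X ≠ 0) →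
      ∃ j : J, Nonempty (X ≅ obj j) ∧
        ∀ j' : J, ¬ Nonempty (obj j' ≅ obj j) →
          (∀ f : X ⟶ obj j', f = 0) ∧ (∀ g : obj j' ⟶ X, g = 0)) ∧
    (∀ X Y : C, ((∀ f : X ⟶ X, ∃ c : k, f = c • 𝟙 X) ∧ 𝟙 X ≠ 0) →
      ((∀ f : Y ⟶ Y, ∃ c : k, f = c • 𝟙 Y) ∧ 𝟙 Y ≠ 0) →
      (Nonempty (X ≅ Y) ∨ ∀ f : X ⟶ Y, f = 0)) := by
  have hinj : ∀ X Y : C, Function.Injective (homDecomp k obj X Y) := fun X Y => (hΦ X Y).1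
  have hone : ∀ j, 𝟙 (obj j) ≠ 0 := by
    intro j h
    obtain ⟨f, hf⟩ := hnn j
    exact hf (by rw [← Category.id_comp f, h, Limits.zero_comp])
  have hend : ∀ j (f : obj j ⟶ obj j), ∃ c : k, f = c • 𝟙 (obj j) :=
    fun j f => end_eq_smul_id hfd hinj (hone j) f
  have hiso : ∀ X : C, ((∀ f : X ⟶ X, ∃ c : k, f = c • 𝟙 X) ∧ 𝟙 X ≠ 0) →
      ∃ j : J, Nonempty (X ≅ obj j) := by
    rintro X ⟨hX, hX1⟩
    obtain ⟨j, f, g, hfg⟩ := exists_comp_ne_zero (hΦ X X).2 hX1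
    exact ⟨j, nonempty_iso_of_comp_ne_zero hX (hend j) f g hfg⟩
  refine ⟨fun j => ⟨hend j, hone j⟩, fun X hX => ?_, fun X Y hX hY => ?_⟩
  · obtain ⟨j, ⟨e⟩⟩ := hiso X hX
    refine ⟨j, ⟨e⟩, fun j' hj' => ?_⟩
    have hne : j' ≠ j := by
      rintro rfl
      exact hj' ⟨Iso.refl _⟩
    refine ⟨fun f => ?_, fun g => ?_⟩
    · have h := hom_eq_zero_of_ne hone hinj hne.symm (e.inv ≫ f)
      rw [← e.hom_inv_id_assoc f, h, Limits.comp_zero]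
    · have h := hom_eq_zero_of_ne hone hinj hne (g ≫ e.hom)
      rw [← Category.comp_id g, ← e.hom_inv_id, ← Category.assoc, h, Limits.zero_comp]
  · obtain ⟨i, ⟨e⟩⟩ := hiso X hX
    obtain ⟨j, ⟨e'⟩⟩ := hiso Y hY
    by_cases hij : i = j
    · subst hij
      exact Or.inl ⟨e ≪≫ e'.symm⟩
    · refine Or.inr fun f => ?_
      have h := hom_eq_zero_of_ne hone hinj hij (e.inv ≫ f ≫ e'.hom)
      calc f = e.hom ≫ (e.inv ≫ f ≫ e'.hom) ≫ e'.inv := by simp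
        _ = 0 := by rw [h]; simp
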